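/- For every integer k ≥ 74 and every real r with 0 < r ≤ 2^(k-1)·ln 2, the following hold: g_r(α) < g_r(1/2) for every α ∈ (1/2, 0.9], and g_r''(1/2) < 0. -/

import Mathlib

/-- The correlation function for NAE `k`-SAT:
`f_N(α) = 1 - 2^(2-k) + 2^(1-k) (α^k + (1-α)^k)`. -/
noncomputable def fN (k : ℕ) (α : ℝ) : ℝ :=
  1 - (2 : ℝ) ^ ((2 : ℤ) - k) + (2 : ℝ) ^ ((1 : ℤ) - k) * (α ^ k + (1 - α) ^ k)

/-- `g_r(α) = f_N(α)^r / (α^α (1-α)^(1-α))`, with the `0^0 = 1` convention of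
`Real.rpow` at the endpoints. -/
noncomputable def gr (k : ℕ) (r : ℝ) (α : ℝ) : ℝ :=
  fN k α ^ r / (α ^ α * (1 - α) ^ (1 - α))

/-- Auxiliary pair: `(1+x)^k+(1-x)^k = 2 + x^2 P`, `(1+x)^k-(1-x)^k = x Q`. -/
noncomputable def PQ (x : ℝ) : ℕ → ℝ × ℝ
  | 0 => (0, 0)
  | n + 1 => ((PQ x n).1 + (PQ x n).2, (PQ x n).2 + 2 + x ^ 2 * (PQ x n).1)

lemma PQ_eq (x : ℝ) (k : ℕ) : (1 + x) ^ k + (1 - x) ^ k = 2 + x ^ 2 * (PQ x k).1 ∧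
    (1 + x) ^ k - (1 - x) ^ k = x * (PQ x k).2 := by
  induction k with
  | zero => simp [PQ]; norm_num
  | succ n ih =>
    obtain ⟨h1, h2⟩ := ih
    simp only [PQ, pow_succ]
    constructor
    · linear_combination h1 + x * h2
    · linear_combination h2 + x * h1

lemma PQ_mono {x y : ℝ} (hx : 0 ≤ x) (hxy : x ≤ y) (k : ℕ) :
    0 ≤ (PQ x k).1 ∧ 0 ≤ (PQ x k).2 ∧ (PQ x k).1 ≤ (PQ y k).1 ∧ (PQ x k).2 ≤ (PQ y k).2 := by
  induction k with
  | zero => simp [PQ]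
  | succ n ih =>
    obtain ⟨h1, h2, h3, h4⟩ := ih
    simp only [PQ]
    have h5 : x ^ 2 * (PQ x n).1 ≤ y ^ 2 * (PQ y n).1 := by gcongr
    have h6 : 0 ≤ x ^ 2 * (PQ x n).1 := by positivity
    refine ⟨?_, ?_, ?_, ?_⟩ <;> linarith

lemma PQ_zero (k : ℕ) : (PQ 0 k).1 = k * (k - 1) ∧ (PQ 0 k).2 = 2 * k := by
  induction k with
  | zero => simp [PQ]
  | succ n ih =>
    obtain ⟨h1, h2⟩ := ih
    simp only [PQ, h1, h2]
    push_cast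
    constructor <;> ring

lemma uP_le {x : ℝ} (hx : 0 ≤ x) (hx8 : x ≤ 4 / 5) (k : ℕ) (hk : 74 ≤ k) :
    (1 / 2 : ℝ) ^ k * (PQ x k).1 ≤ 1 / 100 := by
  have h1 := (PQ_mono hx hx8 k).2.2.1
  have h2 := (PQ_eq (4 / 5) k).1
  have hu : (0 : ℝ) < (1 / 2 : ℝ) ^ k := by positivity
  have h3 : (1 / 2 : ℝ) ^ k * (1 + 4 / 5) ^ k = (9 / 10) ^ k := by
    rw [← mul_pow]; norm_num
  have h4 : (1 / 2 : ℝ) ^ k * (1 - 4 / 5) ^ k = (1 / 10) ^ k := by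
    rw [← mul_pow]; norm_num
  have h5 : (9 / 10 : ℝ) ^ k ≤ (9 / 10) ^ 74 :=
    pow_le_pow_of_le_one (by norm_num) (by norm_num) hk
  have h6 : (1 / 10 : ℝ) ^ k ≤ (1 / 10) ^ 74 :=
    pow_le_pow_of_le_one (by norm_num) (by norm_num) hk
  have h7 : (9 / 10 : ℝ) ^ 74 + (1 / 10) ^ 74 ≤ 64 / 10000 := by norm_num
  have h8 : (1 / 2 : ℝ) ^ k * (PQ x k).1 ≤ (1 / 2 : ℝ) ^ k * (PQ (4 / 5) k).1 :=
    mul_le_mul_of_nonneg_left h1 hu.le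
  have h9 : (9 / 10 : ℝ) ^ k + (1 / 10) ^ k =
      2 * (1 / 2 : ℝ) ^ k + (16 / 25) * ((1 / 2 : ℝ) ^ k * (PQ (4 / 5) k).1) := by
    linear_combination (1 / 2 : ℝ) ^ k * h2 - h3 - h4
  linarith

lemma u_le (k : ℕ) (hk : 74 ≤ k) : (1 / 2 : ℝ) ^ k ≤ 1 / 1000 := by
  have h5 : (1 / 2 : ℝ) ^ k ≤ (1 / 2) ^ 74 :=
    pow_le_pow_of_le_one (by norm_num) (by norm_num) hk
  have : (1 / 2 : ℝ) ^ 74 ≤ 1 / 1000 := by norm_num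
  linarith

lemma fN_eq (k : ℕ) (α : ℝ) : fN k α =
    1 - 4 * (1 / 2 : ℝ) ^ k + 2 * (1 / 2 : ℝ) ^ k * (α ^ k + (1 - α) ^ k) := by
  unfold fN
  rw [zpow_sub₀ two_ne_zero, zpow_sub₀ two_ne_zero, zpow_natCast, one_div, inv_pow]
  norm_num [div_eq_mul_inv]

lemma ru_le (k : ℕ) (r : ℝ) (hr : r ≤ (2 : ℝ) ^ ((k : ℤ) - 1) * Real.log 2) :
    r * (2 * (1 / 2 : ℝ) ^ k) ≤ 7 / 10 := by
  have h0 : (2 : ℝ) ^ ((k : ℤ) - 1) * (2 * (1 / 2 : ℝ) ^ k) = 1 := by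
    rw [zpow_sub₀ two_ne_zero, zpow_natCast, one_div, inv_pow]
    field_simp
  have h1 := mul_le_mul_of_nonneg_right hr (by positivity : (0 : ℝ) ≤ 2 * (1 / 2 : ℝ) ^ k)
  have h2 := Real.log_two_lt_d9
  have h3 : (2 : ℝ) ^ ((k : ℤ) - 1) * Real.log 2 * (2 * (1 / 2 : ℝ) ^ k) = Real.log 2 := by
    linear_combination Real.log 2 * h0
  linarith

lemma fN_pos (k : ℕ) (hk : 74 ≤ k) {α : ℝ} (h0 : 0 < α) (h1 : α < 1) : 0 < fN k α := by
  rw [fN_eq]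
  have := u_le k hk
  have h2 : 0 < 1 - α := by linarith
  have : 0 < 2 * (1 / 2 : ℝ) ^ k * (α ^ k + (1 - α) ^ k) := by positivity
  linarith

/-- logarithm of `gr` -/
noncomputable def hh (k : ℕ) (r α : ℝ) : ℝ :=
  r * Real.log (fN k α) - (α * Real.log α + (1 - α) * Real.log (1 - α))

lemma gr_eq (k : ℕ) (hk : 74 ≤ k) (r : ℝ) {α : ℝ} (h0 : 0 < α) (h1 : α < 1) :
    gr k r α = Real.exp (hh k r α) := by
  unfold gr hh
  rw [Real.rpow_def_of_pos (fN_pos k hk h0 h1), Real.rpow_def_of_pos h0,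
    Real.rpow_def_of_pos (by linarith : 0 < 1 - α), ← Real.exp_add, ← Real.exp_sub]
  ring_nf

lemma fN_half (k : ℕ) : fN k (1 / 2) = 1 - 4 * (1 / 2 : ℝ) ^ k + 4 * ((1 / 2 : ℝ) ^ k) ^ 2 := by
  rw [fN_eq, show (1 : ℝ) - 1 / 2 = 1 / 2 by norm_num]; ring

lemma fN_x (k : ℕ) (x : ℝ) : fN k ((1 + x) / 2) = fN k (1 / 2) +
    2 * (1 / 2 : ℝ) ^ k * (x ^ 2 * ((1 / 2 : ℝ) ^ k * (PQ x k).1)) := by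
  have h := (PQ_eq x k).1
  rw [fN_half, fN_eq, show (1 + x) / 2 = (1 / 2) * (1 + x) by ring,
    show 1 - (1 / 2) * (1 + x) = (1 / 2) * (1 - x) by ring, mul_pow, mul_pow]
  linear_combination 2 * (1 / 2 : ℝ) ^ k * (1 / 2 : ℝ) ^ k * h

lemma ent_bound {x : ℝ} (hx : 0 < x) (hx1 : x ≤ 4 / 5) :
    x ^ 2 / 6 - Real.log 2 ≤ (1 + x) / 2 * Real.log ((1 + x) / 2) +
      (1 - (1 + x) / 2) * Real.log (1 - (1 + x) / 2) := by
  have hp : 0 < 1 - x := by linarith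
  rw [show 1 - (1 + x) / 2 = (1 - x) / 2 by ring, Real.log_div (by linarith) two_ne_zero,
    Real.log_div (by linarith) two_ne_zero]
  have h1 := Real.le_log_one_add_of_nonneg hx.le
  have h2 := Real.one_sub_inv_le_log_of_pos hp
  have h3 : -x ≤ (1 - x) * Real.log (1 - x) := by
    have := mul_le_mul_of_nonneg_left h2 hp.le
    have e : (1 - x) * (1 - (1 - x)⁻¹) = -x := by field_simp; ring
    linarith
  have h4 : x + x ^ 2 / 3 ≤ (1 + x) * Real.log (1 + x) := by
    have := mul_le_mul_of_nonneg_left h1 (by linarith : 0 ≤ 1 + x)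
    refine le_trans ?_ this
    rw [← mul_div_assoc, le_div_iff₀ (by linarith)]
    nlinarith [mul_pos hx hx, mul_pos (mul_pos hx hx) hp]
  linarith

lemma hh_lt (k : ℕ) (hk : 74 ≤ k) (r : ℝ) (hr0 : 0 < r)
    (hr : r ≤ (2 : ℝ) ^ ((k : ℤ) - 1) * Real.log 2) {x : ℝ} (hx : 0 < x) (hx1 : x ≤ 4 / 5) :
    hh k r ((1 + x) / 2) < hh k r (1 / 2) := by
  have hent := ent_bound hx hx1
  have hf0 : 0 < fN k (1 / 2) := fN_pos k hk (by norm_num) (by norm_num)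
  have hf1 : 0 < fN k ((1 + x) / 2) := fN_pos k hk (by linarith) (by linarith)
  have hf2 : 1 / 2 ≤ fN k (1 / 2) := by
    rw [fN_half]; nlinarith [u_le k hk]
  have hru := ru_le k r hr
  have huP := uP_le hx.le hx1 k hk
  have hP0 := (PQ_mono hx.le hx1 k).1
  have hu : (0 : ℝ) < (1 / 2 : ℝ) ^ k := by positivity
  have hlog : Real.log (fN k ((1 + x) / 2)) - Real.log (fN k (1 / 2)) ≤
      2 * (2 * (1 / 2 : ℝ) ^ k * (x ^ 2 * ((1 / 2 : ℝ) ^ k * (PQ x k).1))) := by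
    rw [← Real.log_div hf1.ne' hf0.ne']
    refine (Real.log_le_sub_one_of_pos (div_pos hf1 hf0)).trans ?_
    rw [fN_x, add_div, div_self hf0.ne', add_sub_cancel_left, div_le_iff₀ hf0]
    have : 0 ≤ 2 * (1 / 2 : ℝ) ^ k * (x ^ 2 * ((1 / 2 : ℝ) ^ k * (PQ x k).1)) := by positivity
    nlinarith
  have hmul := mul_le_mul_of_nonneg_left hlog hr0.le
  have h1 : x ^ 2 * ((1 / 2 : ℝ) ^ k * (PQ x k).1) ≤ x ^ 2 * (1 / 100) :=
    mul_le_mul_of_nonneg_left huP (by positivity)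
  have h2 : (r * (2 * (1 / 2 : ℝ) ^ k)) * (x ^ 2 * ((1 / 2 : ℝ) ^ k * (PQ x k).1)) ≤
      7 / 10 * (x ^ 2 * (1 / 100)) := by
    apply mul_le_mul hru h1 (by positivity) (by norm_num)
  have hx2 : 0 < x ^ 2 := by positivity
  unfold hh
  have e : (1 / 2 : ℝ) * Real.log (1 / 2) + (1 - 1 / 2) * Real.log (1 - 1 / 2) = - Real.log 2 := by
    rw [show (1 : ℝ) - 1 / 2 = 1 / 2 by norm_num, one_div, Real.log_inv]; ring
  rw [e]
  linarith

/-- derivative of `fN` -/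
noncomputable def fN' (k : ℕ) (α : ℝ) : ℝ :=
  2 * (1 / 2 : ℝ) ^ k * (k * α ^ (k - 1) - k * (1 - α) ^ (k - 1))

lemma hasDeriv_fN (k : ℕ) (α : ℝ) : HasDerivAt (fN k) (fN' k α) α := by
  have e : fN k = fun α => 1 - 4 * (1 / 2 : ℝ) ^ k +
      2 * (1 / 2 : ℝ) ^ k * (α ^ k + (1 - α) ^ k) := funext (fN_eq k)
  rw [e]
  have h1 := hasDerivAt_pow k α
  have h2 := ((hasDerivAt_id α).const_sub 1).pow k
  have h3 := ((h1.add h2).const_mul (2 * (1 / 2 : ℝ) ^ k)).const_add (1 - 4 * (1 / 2 : ℝ) ^ k)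
  refine h3.congr_deriv ?_
  simp [fN']; ring

lemma hasDeriv_fN' (k : ℕ) (α : ℝ) : HasDerivAt (fN' k)
    (2 * (1 / 2 : ℝ) ^ k * (k * ((k - 1 : ℕ) * α ^ (k - 1 - 1)) +
      k * ((k - 1 : ℕ) * (1 - α) ^ (k - 1 - 1)))) α := by
  unfold fN'
  have h1 := (hasDerivAt_pow (k - 1) α).const_mul (k : ℝ)
  have h2 := (((hasDerivAt_id α).const_sub 1).pow (k - 1)).const_mul (k : ℝ)
  have h3 := (h1.sub h2).const_mul (2 * (1 / 2 : ℝ) ^ k)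
  refine h3.congr_deriv ?_
  simp

/-- derivative of `hh` -/
noncomputable def hh' (k : ℕ) (r α : ℝ) : ℝ :=
  r * (fN' k α / fN k α) - (Real.log α - Real.log (1 - α))

lemma hasDeriv_hh (k : ℕ) (hk : 74 ≤ k) (r : ℝ) {α : ℝ} (h0 : 0 < α) (h1 : α < 1) :
    HasDerivAt (hh k r) (hh' k r α) α := by
  have hs : 0 < 1 - α := by linarith
  have a1 := ((hasDeriv_fN k α).log (fN_pos k hk h0 h1).ne').const_mul r
  have a2 := (hasDerivAt_id α).mul (Real.hasDerivAt_log h0.ne')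
  have b := (hasDerivAt_id α).const_sub 1
  have a3 := b.mul (b.log hs.ne')
  refine (a1.sub (a2.add a3)).congr_deriv ?_
  simp only [hh', id]
  field_simp
  ring

lemma hasDeriv_hh' (k : ℕ) (hk : 74 ≤ k) (r : ℝ) :
    HasDerivAt (hh' k r)
      (r * (2 * (1 / 2 : ℝ) ^ k) * (8 * ((1 / 2 : ℝ) ^ k * (k * (k - 1)))) / fN k (1 / 2) - 4)
      (1 / 2) := by
  have hf0 : 0 < fN k (1 / 2) := fN_pos k hk (by norm_num) (by norm_num)
  have a1 := ((hasDeriv_fN' k (1 / 2)).div (hasDeriv_fN k (1 / 2)) hf0.ne').const_mul r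
  have a2 := Real.hasDerivAt_log (by norm_num : (1 / 2 : ℝ) ≠ 0)
  have b := ((hasDerivAt_id (1 / 2 : ℝ)).const_sub 1).log (by norm_num)
  refine (a1.sub (a2.sub b)).congr_deriv ?_
  have e : fN' k (1 / 2) = 0 := by
    unfold fN'; rw [show (1 : ℝ) - 1 / 2 = 1 / 2 by norm_num]; ring
  obtain ⟨n, rfl⟩ : ∃ n, k = n + 2 := ⟨k - 2, by omega⟩
  rw [e, show (1 : ℝ) - 1 / 2 = 1 / 2 by norm_num]
  simp only [show n + 2 - 1 = n + 1 by omega, show n + 1 - 1 = n by omega, id]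
  push_cast
  field_simp
  ring

theorem gr_near_half (k : ℕ) (hk : 74 ≤ k) (r : ℝ) (hr0 : 0 < r)
    (hr : r ≤ (2 : ℝ) ^ ((k : ℤ) - 1) * Real.log 2) :
    (∀ α ∈ Set.Ioc (1 / 2 : ℝ) 0.9, gr k r α < gr k r (1 / 2)) ∧
      deriv (deriv (gr k r)) (1 / 2) < 0 := by
  constructor
  · rintro α ⟨h1, h2⟩
    norm_num at h2
    rw [gr_eq k hk r (by linarith) (by linarith), gr_eq k hk r (by norm_num) (by norm_num),
      Real.exp_lt_exp]
    have := hh_lt k hk r hr0 hr (x := 2 * α - 1) (by linarith) (by linarith)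
    rwa [show (1 + (2 * α - 1)) / 2 = α by ring] at this
  · have hev : ∀ α ∈ Set.Ioo (0 : ℝ) 1, deriv (gr k r) α = Real.exp (hh k r α) * hh' k r α := by
      rintro α ⟨h0, h1⟩
      have : gr k r =ᶠ[nhds α] fun α => Real.exp (hh k r α) := by
        filter_upwards [Ioo_mem_nhds h0 h1] with β hβ
        exact gr_eq k hk r hβ.1 hβ.2
      rw [this.deriv_eq]
      exact (hasDeriv_hh k hk r h0 h1).exp.deriv
    have hev2 : deriv (gr k r) =ᶠ[nhds (1 / 2)] fun α => Real.exp (hh k r α) * hh' k r α := by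
      filter_upwards [Ioo_mem_nhds (by norm_num : (0 : ℝ) < 1 / 2) (by norm_num : (1 / 2 : ℝ) < 1)]
        with β hβ
      exact hev β hβ
    rw [hev2.deriv_eq]
    have hd := ((hasDeriv_hh k hk r (α := 1 / 2) (by norm_num) (by norm_num)).exp).mul
      (hasDeriv_hh' k hk r)
    have hd2 := hd.deriv
    have e : hh' k r (1 / 2) = 0 := by
      unfold hh' fN'; rw [show (1 : ℝ) - 1 / 2 = 1 / 2 by norm_num]; ring
    rw [e, mul_zero, zero_add] at hd2
    refine lt_of_eq_of_lt hd2 ?_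
    refine mul_neg_of_pos_of_neg (Real.exp_pos _) ?_
    have hf0 : 0 < fN k (1 / 2) := fN_pos k hk (by norm_num) (by norm_num)
    have hf2 : 1 / 2 ≤ fN k (1 / 2) := by
      rw [fN_half]; nlinarith [u_le k hk]
    have hru := ru_le k r hr
    have huP := uP_le le_rfl (by norm_num) k hk
    have hP0 := (PQ_mono le_rfl (le_refl (0 : ℝ)) k).1
    rw [(PQ_zero k).1] at huP hP0
    rw [sub_neg, div_lt_iff₀ hf0]
    have : r * (2 * (1 / 2 : ℝ) ^ k) * (8 * ((1 / 2 : ℝ) ^ k * (k * (k - 1)))) ≤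
        7 / 10 * (8 * (1 / 100)) := by
      apply mul_le_mul hru (by linarith) (by positivity) (by norm_num)
    linarith
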